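/- arXiv:1607.02409 — 3 statements merged into one kernel-verified Lean document; each statement's English description precedes it below -/
import Mathlib

section
/- For every real ξ ≠ 0 one has (tanh ξ + ξ(1 − tanh²ξ))² < 4·ξ·tanh ξ. Equivalently, with J(x) = x·tanh x and J' its derivative, the quantity Λ(ξ) = J'(ξ)² − 4J(ξ) is strictly negative for all ξ ≠ 0. -/
noncomputable def J (x : ℝ) : ℝ := x * Real.tanh x

noncomputable def J' (ξ : ℝ) : ℝ := Real.tanh ξ + ξ * (1 - Real.tanh ξ ^ 2)

noncomputable def Λ (ξ : ℝ) : ℝ := J' ξ ^ 2 - 4 * J ξ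

/-!
For `ξ > 0` the two summands of `J' ξ = tanh ξ + ξ sech² ξ` compare as `ξ sech² ξ < tanh ξ < ξ`, the
first inequality being `2 ξ < sinh (2 ξ)` in disguise. Hence
`J'(ξ)² < (2 tanh ξ)² < 4 ξ tanh ξ = 4 J(ξ)`, and negative `ξ` follow because `Λ` is even.
-/

open Real

lemma one_sub_tanh_sq (x : ℝ) : 1 - tanh x ^ 2 = (cosh x ^ 2)⁻¹ := by
  have hc : cosh x ≠ 0 := (cosh_pos x).ne'
  rw [tanh_eq_sinh_div_cosh]
  field_simp
  exact cosh_sq_sub_sinh_sq x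

lemma tanh_pos {x : ℝ} (hx : 0 < x) : 0 < tanh x := by
  rw [tanh_eq_sinh_div_cosh]
  exact div_pos (sinh_pos_iff.2 hx) (cosh_pos x)

lemma sinh_lt_mul_cosh {x : ℝ} (hx : 0 < x) : sinh x < x * cosh x := by
  obtain ⟨c, ⟨hc_pos, hc_lt⟩, hc⟩ : ∃ c ∈ Set.Ioo 0 x, cosh c = (sinh x - sinh 0) / (x - 0) :=
    exists_hasDerivAt_eq_slope sinh cosh hx continuous_sinh.continuousOn
      fun y _ ↦ hasDerivAt_sinh y
  calc
    sinh x = x * cosh c := by rw [hc, sinh_zero, sub_zero, sub_zero, mul_div_cancel₀ _ hx.ne']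
    _ < x * cosh x := by
      have hcosh : cosh c < cosh x := cosh_strictMonoOn hc_pos.le hx.le hc_lt
      gcongr

lemma tanh_lt_self {x : ℝ} (hx : 0 < x) : tanh x < x := by
  rw [tanh_eq_sinh_div_cosh, div_lt_iff₀ (cosh_pos x)]
  exact sinh_lt_mul_cosh hx

lemma self_lt_sinh_mul_cosh {x : ℝ} (hx : 0 < x) : x < sinh x * cosh x := by
  have h : 2 * x < sinh (2 * x) := self_lt_sinh_iff.2 (by positivity)
  rw [sinh_two_mul] at h
  linarith

lemma mul_one_sub_tanh_sq_lt_tanh {x : ℝ} (hx : 0 < x) : x * (1 - tanh x ^ 2) < tanh x :=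
  calc
    x * (1 - tanh x ^ 2) = x / cosh x ^ 2 := by rw [one_sub_tanh_sq, div_eq_mul_inv]
    _ < sinh x * cosh x / cosh x ^ 2 := by gcongr; exact self_lt_sinh_mul_cosh hx
    _ = tanh x := by rw [tanh_eq_sinh_div_cosh]; field_simp

lemma J'_pos {ξ : ℝ} (hξ : 0 < ξ) : 0 < J' ξ :=
  add_pos (tanh_pos hξ) (mul_pos hξ (sub_pos.2 (tanh_sq_lt_one ξ)))

lemma J'_lt_two_mul_tanh {ξ : ℝ} (hξ : 0 < ξ) : J' ξ < 2 * tanh ξ := by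
  unfold J'
  linarith [mul_one_sub_tanh_sq_lt_tanh hξ]

lemma J'_sq_lt_four_mul_J {ξ : ℝ} (hξ : 0 < ξ) : J' ξ ^ 2 < 4 * J ξ := by
  have ht : 0 < tanh ξ := tanh_pos hξ
  calc
    J' ξ ^ 2 < (2 * tanh ξ) ^ 2 :=
      pow_lt_pow_left₀ (J'_lt_two_mul_tanh hξ) (J'_pos hξ).le two_ne_zero
    _ = 4 * (tanh ξ * tanh ξ) := by ring
    _ < 4 * (ξ * tanh ξ) := by gcongr; exact tanh_lt_self hξ

lemma even_J : Function.Even J := fun ξ ↦ by simp only [J, tanh_neg, neg_mul_neg]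

lemma odd_J' : Function.Odd J' := fun ξ ↦ by
  simp only [J', tanh_neg]
  ring

lemma even_Λ : Function.Even Λ := fun ξ ↦ by simp only [Λ, even_J ξ, odd_J' ξ, neg_sq]

/-- For every nonzero frequency, `J'(ξ)² < 4 J(ξ)`, i.e. `Λ(ξ) < 0`. -/
theorem Lambda_neg (ξ : ℝ) (hξ : ξ ≠ 0) :
    (Real.tanh ξ + ξ * (1 - Real.tanh ξ ^ 2)) ^ 2 < 4 * ξ * Real.tanh ξ ∧ Λ ξ < 0 := by
  have hΛ : Λ ξ < 0 := by
    have h : Λ |ξ| < 0 := sub_neg.2 (J'_sq_lt_four_mul_J (abs_pos.2 hξ))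
    rcases abs_choice ξ with habs | habs
    · rwa [habs] at h
    · rwa [habs, even_Λ ξ] at h
  refine ⟨?_, hΛ⟩
  rw [mul_assoc]
  exact sub_neg.1 hΛ
end

section
/- Let J(x) = x·tanh x. For all real ξ and η with ξ·η ≥ 0 one has |J(ξ) + J(η) − J(ξ+η)| ≤ 2(e^{−|ξ|} + e^{−|η|}). -/
/-!
`|x| - J x = |x| (1 - tanh |x|) = |x| exp (-|x|) / cosh |x|` lies between `0` and `exp (-|x|)`,
because `t ≤ cosh t`. Hence `J` inherits the additivity defect of the absolute value up to
exponentially small errors, and for frequencies of the same sign that defect vanishes.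
-/

theorem self_le_cosh (x : ℝ) : x ≤ Real.cosh x := by
  rcases le_total 0 x with hx | hx
  · exact (Real.self_le_sinh_iff.mpr hx).trans (Real.sinh_lt_cosh x).le
  · exact hx.trans (Real.cosh_pos x).le

theorem one_sub_tanh (x : ℝ) : 1 - Real.tanh x = Real.exp (-x) / Real.cosh x := by
  rw [Real.tanh_eq_sinh_div_cosh, one_sub_div (Real.cosh_pos x).ne', Real.cosh_sub_sinh]

theorem mul_one_sub_tanh_le_exp_neg (x : ℝ) : x * (1 - Real.tanh x) ≤ Real.exp (-x) := by
  rw [one_sub_tanh, mul_div_assoc', div_le_iff₀ (Real.cosh_pos x), mul_comm]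
  exact mul_le_mul_of_nonneg_left (self_le_cosh x) (Real.exp_pos (-x)).le

theorem J_neg (x : ℝ) : J (-x) = J x := by
  rw [J, J, Real.tanh_neg, neg_mul_neg]

theorem J_abs (x : ℝ) : J |x| = J x := by
  rcases abs_choice x with hx | hx
  · rw [hx]
  · rw [hx, J_neg]

theorem abs_sub_J (x : ℝ) : |x| - J x = |x| * (1 - Real.tanh |x|) := by
  rw [← J_abs, J, mul_one_sub]

theorem abs_sub_J_nonneg (x : ℝ) : 0 ≤ |x| - J x := by
  rw [abs_sub_J]
  exact mul_nonneg (abs_nonneg x) (sub_nonneg.mpr (Real.tanh_lt_one |x|).le)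

theorem abs_sub_J_le_exp_neg_abs (x : ℝ) : |x| - J x ≤ Real.exp (-|x|) :=
  (abs_sub_J x).trans_le (mul_one_sub_tanh_le_exp_neg |x|)

theorem J_almost_additive_same_sign_general (ξ η : ℝ) :
    |J ξ + J η - J (ξ + η) - (|ξ| + |η| - |ξ + η|)| ≤
      max (Real.exp (-|ξ + η|)) (Real.exp (-|ξ|) + Real.exp (-|η|)) := by
  calc
    |J ξ + J η - J (ξ + η) - (|ξ| + |η| - |ξ + η|)|
        = |(|ξ + η| - J (ξ + η)) - ((|ξ| - J ξ) + (|η| - J η))| := by congr 1; ring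
    _ ≤ max (Real.exp (-|ξ + η|)) (Real.exp (-|ξ|) + Real.exp (-|η|)) :=
      abs_sub_le_of_nonneg_of_le
        (abs_sub_J_nonneg (ξ + η))
        (le_max_of_le_left (abs_sub_J_le_exp_neg_abs (ξ + η)))
        (add_nonneg (abs_sub_J_nonneg ξ) (abs_sub_J_nonneg η))
        (le_max_of_le_right
          (add_le_add (abs_sub_J_le_exp_neg_abs ξ) (abs_sub_J_le_exp_neg_abs η)))

/-- For frequencies of the same sign, `J(ξ) + J(η) − J(ξ+η)` is exponentially small. -/
theorem J_almost_additive_same_sign (ξ η : ℝ) (h : ξ * η ≥ 0) :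
    |J ξ + J η - J (ξ + η)| ≤ 2 * (Real.exp (-|ξ|) + Real.exp (-|η|)) := by
  have hadd : |ξ + η| = |ξ| + |η| := (abs_add_eq_add_abs_iff ξ η).mpr (mul_nonneg_iff.mp h)
  have hexp : Real.exp (-(|ξ| + |η|)) ≤ Real.exp (-|ξ|) :=
    Real.exp_le_exp.mpr (neg_le_neg (le_add_of_nonneg_right (abs_nonneg η)))
  calc
    |J ξ + J η - J (ξ + η)|
        ≤ max (Real.exp (-(|ξ| + |η|))) (Real.exp (-|ξ|) + Real.exp (-|η|)) := by
      simpa only [hadd, sub_self, sub_zero] using J_almost_additive_same_sign_general ξ η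
    _ = Real.exp (-|ξ|) + Real.exp (-|η|) :=
      max_eq_right (hexp.trans (le_add_of_nonneg_right (Real.exp_pos _).le))
    _ ≤ 2 * (Real.exp (-|ξ|) + Real.exp (-|η|)) :=
      le_mul_of_one_le_left (by positivity) one_le_two
end

section
/- Let 𝒯 denote the Fourier multiplier with symbol −i·tanh ξ, i.e. for a Schwartz function f, 𝒯f is the Schwartz function with Fourier transform ξ ↦ −i·tanh(ξ)·f̂(ξ), where f̂(ξ) = (2π)^{−1/2}·∫_ℝ f(α)e^{−iαξ} dα. Then 𝒯 maps real-valued Schwartz functions to real-valued Schwartz functions, and for all real-valued Schwartz functions u and v one has the product formula u·𝒯v + (𝒯u)·v = 𝒯( u·v − (𝒯u)·(𝒯v) ). -/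
open MeasureTheory

/-- The Fourier transform `f̂(ξ) = (2π)^{−1/2} ∫ f(α) e^{−iαξ} dα`. -/
noncomputable def FT (f : ℝ → ℂ) (ξ : ℝ) : ℂ :=
  ((2 * Real.pi) ^ (-(1 : ℝ) / 2) : ℝ) •
    ∫ α : ℝ, f α * Complex.exp (-(Complex.I * α * ξ))

/-- `g` is the Tilbert transform of `f`, i.e. the Fourier multiplier with
symbol `−i tanh ξ` applied to `f`. -/
def IsTilbert (f g : ℝ → ℂ) : Prop :=
  ∀ ξ : ℝ, FT g ξ = -Complex.I * (Real.tanh ξ : ℂ) * FT f ξ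

/-! Write `σ ξ = -i tanh ξ`. The addition law of `tanh` says
`σ y + σ z = σ (y + z) * (1 - σ y * σ z)`. Since the Fourier transform turns products into
convolutions, the transform of `u · 𝒯v + 𝒯u · v` at `x` is the integral over `y + z = x` of
`(σ y + σ z) * (û y * v̂ z)`, and the law lets the factor `σ x` come out of the integral, leaving
the transform of `u · v - 𝒯u · 𝒯v`. Reality is the symmetry `σ (-ξ) = conj (σ ξ)`.
-/

open FourierTransform SchwartzMap ComplexConjugate

section PolynomialODE

open Polynomial

theorem exists_iteratedDeriv_eq_eval {𝕜 : Type*} [NontriviallyNormedField 𝕜] {f : 𝕜 → 𝕜}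
    {p : 𝕜[X]} (hf : ∀ x, HasDerivAt f (p.eval (f x)) x) (n : ℕ) :
    ∃ q : 𝕜[X], iteratedDeriv n f = fun x => q.eval (f x) := by
  induction n with
  | zero => exact ⟨X, by simp⟩
  | succ n ih =>
    obtain ⟨q, hq⟩ := ih
    refine ⟨derivative q * p, funext fun x => ?_⟩
    rw [iteratedDeriv_succ, hq, eval_mul]
    exact ((q.hasDerivAt (f x)).comp x (hf x)).deriv

theorem hasTemperateGrowth_of_hasDerivAt_eval {f : ℝ → ℝ} {p : ℝ[X]}
    (hf : ∀ x, HasDerivAt f (p.eval (f x)) x) {C : ℝ} (hC : ∀ x, ‖f x‖ ≤ C) :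
    f.HasTemperateGrowth := by
  refine ⟨contDiff_of_differentiable_iteratedDeriv fun n _ => ?_, fun n => ?_⟩ <;>
    obtain ⟨q, hq⟩ := exists_iteratedDeriv_eq_eval hf n
  · rw [hq]
    exact q.differentiable.comp fun x => (hf x).differentiableAt
  · obtain ⟨B, hB⟩ := (isCompact_closedBall (0 : ℝ) C).exists_bound_of_continuousOn
      q.continuousOn
    refine ⟨0, B, fun x => ?_⟩
    simpa [norm_iteratedFDeriv_eq_norm_iteratedDeriv, hq] using hB (f x) (by simpa using hC x)

end PolynomialODE

section Tanh

theorem hasDerivAt_tanh (x : ℝ) : HasDerivAt Real.tanh (1 - Real.tanh x ^ 2) x := by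
  have hcosh := (Real.cosh_pos x).ne'
  have hquot := (Real.hasDerivAt_sinh x).fun_div (Real.hasDerivAt_cosh x) hcosh
  simp only [← Real.tanh_eq_sinh_div_cosh] at hquot
  refine hquot.congr_deriv ?_
  rw [Real.tanh_eq_sinh_div_cosh]
  field_simp

theorem hasTemperateGrowth_tanh : Real.tanh.HasTemperateGrowth :=
  hasTemperateGrowth_of_hasDerivAt_eval (p := 1 - Polynomial.X ^ 2)
    (fun x => by simpa using hasDerivAt_tanh x) fun x => (Real.abs_tanh_lt_one x).le

theorem tanh_add_tanh (x y : ℝ) :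
    Real.tanh x + Real.tanh y = Real.tanh (x + y) * (1 + Real.tanh x * Real.tanh y) := by
  have hx := (Real.cosh_pos x).ne'
  have hy := (Real.cosh_pos y).ne'
  have hxy := (Real.cosh_pos (x + y)).ne'
  simp only [Real.tanh_eq_sinh_div_cosh]
  field_simp
  rw [Real.sinh_add, Real.cosh_add]

end Tanh

section FourierMultiplier

variable {V : Type*} [NormedAddCommGroup V] [InnerProductSpace ℝ V] [FiniteDimensional ℝ V]
  [MeasurableSpace V] [BorelSpace V]

theorem fourier_conj (f : V → ℂ) (x : V) : 𝓕 (fun v => conj (f v)) x = conj (𝓕 f (-x)) := by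
  rw [Real.fourier_eq', Real.fourier_eq', ← integral_conj]
  congr 1 with v
  simp [← Complex.exp_conj, Complex.conj_ofNat]

theorem fourier_neg_of_im_eq_zero {f : V → ℂ} (hf : ∀ v, (f v).im = 0) (x : V) :
    𝓕 f (-x) = conj (𝓕 f x) := by
  have hconj : (fun v => conj (f v)) = f := funext fun v => Complex.conj_eq_iff_im.2 (hf v)
  simpa [hconj] using fourier_conj f (-x)

theorem fourierInv_im_eq_zero {F : V → ℂ} (hF : ∀ x, F (-x) = conj (F x)) (v : V) :
    (𝓕⁻ F v).im = 0 := by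
  rw [← Complex.conj_eq_iff_im]
  calc conj (𝓕⁻ F v) = conj (𝓕 F (-v)) := by rw [Real.fourierInv_eq_fourier_neg]
    _ = 𝓕 (fun x => conj (F x)) v := (fourier_conj F v).symm
    _ = 𝓕⁻ F v := by simp only [Real.fourierInv_eq_fourier_comp_neg, hF]

theorem fourier_fourierMultiplierCLM {σ : V → ℂ} (hσ : σ.HasTemperateGrowth) (f : 𝓢(V, ℂ))
    (x : V) : 𝓕 (fourierMultiplierCLM ℂ σ f) x = σ x * 𝓕 f x := by
  rw [fourierMultiplierCLM_apply, fourier_fourierInv_eq, smulLeftCLM_apply_apply hσ, smul_eq_mul]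

theorem fourierMultiplierCLM_im_eq_zero {σ : V → ℂ} (hσ : σ.HasTemperateGrowth)
    (hσ_neg : ∀ x, σ (-x) = conj (σ x)) {f : 𝓢(V, ℂ)} (hf : ∀ v, (f v).im = 0) (v : V) :
    (fourierMultiplierCLM ℂ σ f v).im = 0 := by
  rw [fourierMultiplierCLM_apply, fourierInv_coe]
  refine fourierInv_im_eq_zero (fun x => ?_) v
  simp only [smulLeftCLM_apply_apply hσ, smul_eq_mul, map_mul, hσ_neg, fourier_coe,
    fourier_neg_of_im_eq_zero hf]

end FourierMultiplier

section ProductFormula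

open Convolution

variable {V E F G : Type*} [NormedAddCommGroup V] [InnerProductSpace ℝ V] [FiniteDimensional ℝ V]
  [MeasurableSpace V] [BorelSpace V] [NormedAddCommGroup E] [NormedSpace ℂ E]
  [NormedAddCommGroup F] [NormedSpace ℂ F] [NormedAddCommGroup G] [NormedSpace ℂ G]

theorem convolutionExists_schwartz (B : E →L[ℂ] F →L[ℂ] G) (f : 𝓢(V, E)) (g : 𝓢(V, F)) :
    ConvolutionExists f g B := fun _ =>
  BddAbove.convolutionExistsAt B
    ⟨SchwartzMap.seminorm ℝ 0 0 g, Set.forall_mem_image.2 fun y _ => norm_le_seminorm ℝ g y⟩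
    MeasurableSet.univ (Set.subset_univ _) f.integrable.integrableOn
    g.continuous.aestronglyMeasurable

theorem fourierInv_neg_apply (f : 𝓢(V, E)) (x : V) : 𝓕⁻ f (-x) = 𝓕 f x := by
  rw [fourierInv_coe, Real.fourierInv_eq_fourier_neg, neg_neg, fourier_coe]

variable [CompleteSpace E] [CompleteSpace F] [CompleteSpace G]

theorem fourier_pairing (B : E →L[ℂ] F →L[ℂ] G) (f : 𝓢(V, E)) (g : 𝓢(V, F)) :
    𝓕 (pairing B f g) = SchwartzMap.convolution B (𝓕 f) (𝓕 g) := by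
  have hinv : 𝓕⁻ (pairing B f g) = SchwartzMap.convolution B (𝓕⁻ f) (𝓕⁻ g) := by
    simp [SchwartzMap.convolution]
  ext x
  calc 𝓕 (pairing B f g) x = 𝓕⁻ (pairing B f g) (-x) := (fourierInv_neg_apply _ x).symm
    _ = ∫ y, B (𝓕⁻ f y) (𝓕⁻ g (-x - y)) := by rw [hinv, convolution_apply, convolution_def]
    _ = ∫ y, B (𝓕⁻ f (-y)) (𝓕⁻ g (-(x - y))) := by
      rw [← integral_neg_eq_self]
      simp only [neg_sub', sub_neg_eq_add]
    _ = ∫ y, B (𝓕 f y) (𝓕 g (x - y)) := by simp only [fourierInv_neg_apply]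
    _ = SchwartzMap.convolution B (𝓕 f) (𝓕 g) x := by rw [convolution_apply, convolution_def]

theorem fourier_pairing_add_pairing_of_symbol {σ : V → ℂ}
    (hσ : ∀ y z, σ y + σ z = σ (y + z) * (1 - σ y * σ z)) (B : E →L[ℂ] F →L[ℂ] G)
    {u Tu : 𝓢(V, E)} {v Tv : 𝓢(V, F)}
    (hu : ∀ x, 𝓕 Tu x = σ x • 𝓕 u x) (hv : ∀ x, 𝓕 Tv x = σ x • 𝓕 v x) (x : V) :
    𝓕 (pairing B u Tv + pairing B Tu v) x =
      σ x • 𝓕 (pairing B u v - pairing B Tu Tv) x := by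
  have hint (f : 𝓢(V, E)) (g : 𝓢(V, F)) : Integrable fun y => B (𝓕 f y) (𝓕 g (x - y)) :=
    convolutionExists_schwartz B (𝓕 f) (𝓕 g) x
  have hlaw (y : V) : σ y + σ (x - y) = σ x * (1 - σ y * σ (x - y)) := by
    simpa using hσ y (x - y)
  have hsub (f g : 𝓢(V, G)) : 𝓕 (f - g) = 𝓕 f - 𝓕 g :=
    map_sub (fourierCLM ℂ 𝓢(V, G)) f g
  simp only [FourierTransform.fourier_add, hsub, add_apply, sub_apply, fourier_pairing,
    convolution_apply, convolution_def]
  rw [← integral_add (hint _ _) (hint _ _), ← integral_sub (hint _ _) (hint _ _),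
    ← integral_smul]
  congr 1 with y
  calc B (𝓕 u y) (𝓕 Tv (x - y)) + B (𝓕 Tu y) (𝓕 v (x - y))
      = (σ y + σ (x - y)) • B (𝓕 u y) (𝓕 v (x - y)) := by
        simp only [hu, hv, map_smul, smul_apply]
        module
    _ = (σ x * (1 - σ y * σ (x - y))) • B (𝓕 u y) (𝓕 v (x - y)) := by rw [hlaw]
    _ = σ x • (B (𝓕 u y) (𝓕 v (x - y)) - B (𝓕 Tu y) (𝓕 Tv (x - y))) := by
        simp only [hu, hv, map_smul, smul_apply]
        module

end ProductFormula

section Tilbert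

/-- The symbol of the Tilbert transform for Mathlib's Fourier transform, whose frequency `x`
corresponds to `ξ = 2πx` in `FT`. -/
noncomputable def tilbertSymbol (x : ℝ) : ℂ :=
  -Complex.I * Real.tanh (2 * Real.pi * x)

theorem hasTemperateGrowth_tilbertSymbol : tilbertSymbol.HasTemperateGrowth := by
  have htanh : (fun x : ℝ => Real.tanh (2 * Real.pi * x)).HasTemperateGrowth :=
    hasTemperateGrowth_tanh.comp (by fun_prop)
  exact (Function.HasTemperateGrowth.const (-Complex.I)).mul
    (Function.Complex.hasTemperateGrowth_ofReal.comp htanh)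

theorem tilbertSymbol_neg (x : ℝ) : tilbertSymbol (-x) = conj (tilbertSymbol x) := by
  simp [tilbertSymbol, -Complex.ofReal_tanh]

theorem tilbertSymbol_add_tilbertSymbol (x y : ℝ) :
    tilbertSymbol x + tilbertSymbol y =
      tilbertSymbol (x + y) * (1 - tilbertSymbol x * tilbertSymbol y) := by
  have htanh : (Real.tanh (2 * Real.pi * x) : ℂ) + Real.tanh (2 * Real.pi * y) =
      Real.tanh (2 * Real.pi * (x + y)) *
        (1 + Real.tanh (2 * Real.pi * x) * Real.tanh (2 * Real.pi * y)) := by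
    rw [mul_add (2 * Real.pi : ℝ)]
    exact_mod_cast tanh_add_tanh (2 * Real.pi * x) (2 * Real.pi * y)
  simp only [tilbertSymbol]
  generalize (Real.tanh (2 * Real.pi * x) : ℂ) = a at *
  generalize (Real.tanh (2 * Real.pi * y) : ℂ) = b at *
  generalize (Real.tanh (2 * Real.pi * (x + y)) : ℂ) = c at *
  linear_combination (-Complex.I) * htanh - Complex.I * a * b * c * Complex.I_sq

theorem FT_eq_smul_fourier (f : ℝ → ℂ) (ξ : ℝ) :
    FT f ξ = (2 * Real.pi) ^ (-(1 : ℝ) / 2) • 𝓕 f (ξ / (2 * Real.pi)) := by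
  rw [FT, Real.fourier_real_eq_integral_exp_smul]
  congr 2 with α
  rw [smul_eq_mul, mul_comm]
  congr 2
  push_cast
  field_simp

theorem isTilbert_iff_fourier {f g : ℝ → ℂ} :
    IsTilbert f g ↔ ∀ x, 𝓕 g x = tilbertSymbol x * 𝓕 f x := by
  have hpi : 2 * Real.pi ≠ 0 := by positivity
  have hc : (2 * Real.pi) ^ (-(1 : ℝ) / 2) ≠ 0 := by positivity
  rw [IsTilbert, (mulLeft_bijective₀ _ hpi).surjective.forall]
  simp only [FT_eq_smul_fourier, mul_div_cancel_left₀ _ hpi, mul_smul_comm, smul_right_inj hc,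
    tilbertSymbol]

theorem IsTilbert.unique {f : ℝ → ℂ} {g g' : 𝓢(ℝ, ℂ)} (hg : IsTilbert f g)
    (hg' : IsTilbert f g') : g = g' := by
  rw [isTilbert_iff_fourier] at hg hg'
  refine (fourierEquiv ℂ 𝓢(ℝ, ℂ)).injective (SchwartzMap.ext fun x => ?_)
  exact (hg x).trans (hg' x).symm

theorem isTilbert_fourierMultiplierCLM (f : 𝓢(ℝ, ℂ)) :
    IsTilbert f (fourierMultiplierCLM ℂ tilbertSymbol f) :=
  isTilbert_iff_fourier.2 (fourier_fourierMultiplierCLM hasTemperateGrowth_tilbertSymbol f)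

theorem IsTilbert.mul_add_mul {u v Tu Tv : 𝓢(ℝ, ℂ)} (hu : IsTilbert u Tu)
    (hv : IsTilbert v Tv) :
    IsTilbert (fun α => u α * v α - Tu α * Tv α) (fun α => u α * Tv α + Tu α * v α) :=
  isTilbert_iff_fourier.2 <| fourier_pairing_add_pairing_of_symbol
    tilbertSymbol_add_tilbertSymbol (ContinuousLinearMap.mul ℂ ℂ)
    (isTilbert_iff_fourier.1 hu) (isTilbert_iff_fourier.1 hv)

end Tilbert

theorem tilbert_real_and_product_formula_general :
    (∀ f : 𝓢(ℝ, ℂ), ∃ Tf : 𝓢(ℝ, ℂ), IsTilbert f Tf ∧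
      ((∀ α, (f α).im = 0) → ∀ α, (Tf α).im = 0)) ∧
    ∀ u v Tu Tv P : 𝓢(ℝ, ℂ), IsTilbert u Tu → IsTilbert v Tv →
      IsTilbert (fun α => u α * v α - Tu α * Tv α) P →
      ∀ α, u α * Tv α + Tu α * v α = P α := by
  refine ⟨fun f => ⟨fourierMultiplierCLM ℂ tilbertSymbol f, isTilbert_fourierMultiplierCLM f,
    fourierMultiplierCLM_im_eq_zero hasTemperateGrowth_tilbertSymbol tilbertSymbol_neg⟩,
    fun u v Tu Tv P hu hv hP => ?_⟩
  have hsum : pairing (.mul ℂ ℂ) u Tv + pairing (.mul ℂ ℂ) Tu v = P :=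
    (hu.mul_add_mul hv).unique hP
  exact DFunLike.congr_fun hsum

/-- The Tilbert transform maps real-valued Schwartz functions to real-valued
Schwartz functions, and satisfies the product formula
`u 𝒯v + (𝒯u) v = 𝒯(uv − (𝒯u)(𝒯v))`. -/
theorem tilbert_real_and_product_formula :
    (∀ f : SchwartzMap ℝ ℂ, (∀ α : ℝ, (f α).im = 0) →
      ∃ Tf : SchwartzMap ℝ ℂ, IsTilbert (⇑f) (⇑Tf) ∧ ∀ α : ℝ, (Tf α).im = 0) ∧
    (∀ u v Tu Tv P : SchwartzMap ℝ ℂ,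
      (∀ α : ℝ, (u α).im = 0) → (∀ α : ℝ, (v α).im = 0) →
      IsTilbert (⇑u) (⇑Tu) → IsTilbert (⇑v) (⇑Tv) →
      IsTilbert (fun α => u α * v α - Tu α * Tv α) (⇑P) →
      ∀ α : ℝ, u α * Tv α + Tu α * v α = P α) :=
  let ⟨hreal, hprod⟩ := tilbert_real_and_product_formula_general
  ⟨fun f hf => (hreal f).imp fun _ hTf => ⟨hTf.1, hTf.2 hf⟩,
    fun u v Tu Tv P _ _ => hprod u v Tu Tv P⟩
end
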